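/- Let X be a topological space with F_θ(X) = κ, and suppose some cardinal λ with κ < λ ≤ (2^κ)^+ is a caliber of X. Then the θ-density of X is at most 2^κ, i.e., there is a set A ⊆ X with |A| ≤ 2^κ and [A]_θ = X. -/

import Mathlib

open Cardinal Set Topology

universe u

/-- A subset `D` is discrete (as a subspace): every point of `D` has an open
neighbourhood meeting `D` only in that point. -/
def IsDiscreteSubset {X : Type u} [TopologicalSpace X] (D : Set X) : Prop :=
  ∀ x ∈ D, ∃ U : Set X, IsOpen U ∧ U ∩ D = {x}

/-- `X` is almost discretely Lindelöf: every discrete subset is contained in a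
Lindelöf subspace. -/
def AlmostDiscretelyLindelof (X : Type u) [TopologicalSpace X] : Prop :=
  ∀ D : Set X, IsDiscreteSubset D → ∃ L : Set X, IsLindelof L ∧ D ⊆ L

/-- The character of `X` is at most `κ`: every point has an open neighbourhood
base of cardinality at most `κ`. -/
def HasCharacterLE (X : Type u) [TopologicalSpace X] (κ : Cardinal.{u}) : Prop :=
  ∀ x : X, ∃ B : Set (Set X), #B ≤ κ ∧ (∀ U ∈ B, IsOpen U ∧ x ∈ U) ∧
    ∀ V ∈ nhds x, ∃ U ∈ B, U ⊆ V

/-- `R` is right-separated: it carries a well-order in which each point has a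
neighbourhood avoiding all strictly later points (initial segments are open). -/
def RightSeparated {X : Type u} [TopologicalSpace X] (R : Set X) : Prop :=
  ∃ r : R → R → Prop, IsWellOrder R r ∧
    ∀ a : R, ∃ U : Set X, IsOpen U ∧ (a : X) ∈ U ∧ ∀ b : R, (b : X) ∈ U → ¬ r a b

/-- `R` is left-separated: it carries a well-order in which each point has a
neighbourhood avoiding all strictly earlier points (initial segments are closed). -/
def LeftSeparated {X : Type u} [TopologicalSpace X] (R : Set X) : Prop :=
  ∃ r : R → R → Prop, IsWellOrder R r ∧
    ∀ a : R, ∃ U : Set X, IsOpen U ∧ (a : X) ∈ U ∧ ∀ b : R, (b : X) ∈ U → ¬ r b a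

/-- The θ-closure operator: `x ∈ thetaCl A` iff the closure of every open
neighbourhood of `x` meets `A`. -/
def thetaCl {X : Type u} [TopologicalSpace X] (A : Set X) : Set X :=
  {x | ∀ U : Set X, IsOpen U → x ∈ U → (closure U ∩ A).Nonempty}

/-- `A` is θ-closed if it coincides with its θ-closure operator value. -/
def IsThetaClosed {X : Type u} [TopologicalSpace X] (A : Set X) : Prop :=
  thetaCl A = A

/-- `[A]_θ`, the smallest θ-closed set containing `A`. -/
def thetaClosure {X : Type u} [TopologicalSpace X] (A : Set X) : Set X :=
  ⋂₀ {B : Set X | A ⊆ B ∧ IsThetaClosed B}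

/-- A (well-ordered) sequence is free if at every cut the closures of the two
pieces are disjoint. -/
def IsFreeSeq {X : Type u} [TopologicalSpace X] {ι : Type u} [LinearOrder ι]
    (f : ι → X) : Prop :=
  ∀ i : ι, closure (f '' {j | j < i}) ∩ closure (f '' {j | i ≤ j}) = ∅

/-- A (well-ordered) sequence is θ-free if at every cut the θ-closure of the
initial piece is disjoint from the closure of the final piece. -/
def IsThetaFreeSeq {X : Type u} [TopologicalSpace X] {ι : Type u} [LinearOrder ι]
    (f : ι → X) : Prop :=
  ∀ i : ι, thetaClosure (f '' {j | j < i}) ∩ closure (f '' {j | i ≤ j}) = ∅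

/-- A cellular family: pairwise disjoint nonempty open sets. -/
def IsCellularFamily {X : Type u} [TopologicalSpace X] (𝒰 : Set (Set X)) : Prop :=
  (∀ U ∈ 𝒰, IsOpen U ∧ U.Nonempty) ∧ 𝒰.PairwiseDisjoint id

/-- `X` is cellular-Lindelöf: every cellular family admits a Lindelöf subspace
meeting each of its members. -/
def CellularLindelof (X : Type u) [TopologicalSpace X] : Prop :=
  ∀ 𝒰 : Set (Set X), IsCellularFamily 𝒰 →
    ∃ L : Set X, IsLindelof L ∧ ∀ U ∈ 𝒰, (U ∩ L).Nonempty

/-- `lam` is a caliber of `X`: any `lam`-many nonempty open sets include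
`lam`-many with a common point. -/
def IsCaliber (X : Type u) [TopologicalSpace X] (lam : Cardinal.{u}) : Prop :=
  ∀ (ι : Type u) (U : ι → Set X), #ι = lam →
    (∀ i, IsOpen (U i) ∧ (U i).Nonempty) →
    ∃ S : Set ι, #S = lam ∧ (⋂ i ∈ S, U i).Nonempty

/-!
Suppose no set of size at most `2 ^ κ` is θ-dense. By recursion on `i < λ`, take the set of points
chosen in the intersections of at most `κ` earlier open sets `U j`; there are at most `2 ^ κ` such
points, so some nonempty open `U i` has closure disjoint from their θ-closure. The caliber yields
more than `κ` of the `U i` with a common point. Keep `κ⁺` of these, in increasing order; the points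
chosen in the intersections of their initial segments form a θ-free sequence of length `κ⁺`, a
contradiction.
-/

section ThetaClosure

variable {X : Type u} [TopologicalSpace X] {A B : Set X} {x : X}

theorem subset_thetaCl (A : Set X) : A ⊆ thetaCl A :=
  fun x hx _ _ hxU => ⟨x, subset_closure hxU, hx⟩

theorem thetaCl_mono (h : A ⊆ B) : thetaCl A ⊆ thetaCl B :=
  fun _ hx U hU hxU => (hx U hU hxU).mono (inter_subset_inter_right _ h)

theorem thetaClosure_mono (h : A ⊆ B) : thetaClosure A ⊆ thetaClosure B :=
  sInter_subset_sInter fun _ hC => ⟨h.trans hC.1, hC.2⟩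

theorem isThetaClosed_thetaClosure (A : Set X) : IsThetaClosed (thetaClosure A) :=
  Subset.antisymm
    (subset_sInter fun _ hB => (thetaCl_mono (sInter_subset_of_mem hB)).trans_eq hB.2)
    (subset_thetaCl _)

theorem IsThetaClosed.exists_isOpen_disjoint_closure (hA : IsThetaClosed A) (hx : x ∉ A) :
    ∃ U, IsOpen U ∧ x ∈ U ∧ Disjoint (closure U) A := by
  by_contra! h
  exact hx (hA.subset fun U hU hxU => not_disjoint_iff_nonempty_inter.1 (h U hU hxU))

end ThetaClosure

section WellOrder

theorem exists_forall_rel_image_Iio {ι α : Type u} [Preorder ι] [WellFoundedLT ι] {c : Cardinal.{u}}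
    {r : Set α → α → Prop} (hι : ∀ i : ι, #(Iio i) ≤ c)
    (h : ∀ s : Set α, #s ≤ c → ∃ a, r s a) :
    ∃ f : ι → α, ∀ i, r (f '' Iio i) (f i) := by
  choose pick hpick using h
  have range_le (i : ι) (g : Iio i → α) : #(range g) ≤ c := mk_range_le.trans (hι i)
  let step (i : ι) (g : ∀ j, j < i → α) : α :=
    pick (range fun j : Iio i => g j j.2) (range_le i _)
  refine ⟨wellFounded_lt.fix step, fun i => ?_⟩
  rw [image_eq_range, wellFounded_lt.fix_eq step i]
  exact hpick _ _

theorem nonempty_ord_toType_orderEmbedding {ι : Type u} [LinearOrder ι] [WellFoundedLT ι]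
    {c : Cardinal.{u}} (h : c ≤ #ι) : Nonempty (c.ord.ToType ↪o ι) := by
  have htype : Ordinal.type (α := c.ord.ToType) (· < ·) ≤ Ordinal.type (α := ι) (· < ·) := by
    rwa [Ordinal.type_toType, ord_le, Ordinal.card_type]
  exact (Ordinal.type_le_iff'.1 htype).map RelEmbedding.orderEmbeddingOfLTEmbedding

theorem mk_Iic_ord_toType_succ_le {c : Cardinal.{u}} (hc : ℵ₀ ≤ c)
    (i : (Order.succ c).ord.ToType) : #(Iic i) ≤ c := by
  rw [← Order.lt_succ_iff]
  simpa using mk_Iic_lt i (by simp) (by simpa using hc.trans (Order.le_succ c))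

end WellOrder

section SInterPoints

variable {X : Type u} [Nonempty X] {κ : Cardinal.{u}} {𝒰 𝒱 : Set (Set X)}

/-- A choice of a point in the intersection of each family of sets; it is an arbitrary point when
the intersection is empty. -/
noncomputable def sInterPoint (𝒱 : Set (Set X)) : X :=
  Classical.epsilon (· ∈ ⋂₀ 𝒱)

/-- The chosen points of the intersections of the subfamilies of `𝒰` of size at most `κ`. -/
def sInterPoints (κ : Cardinal.{u}) (𝒰 : Set (Set X)) : Set X :=
  sInterPoint '' {𝒱 | 𝒱 ⊆ 𝒰 ∧ #𝒱 ≤ κ}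

theorem sInterPoint_mem (h : (⋂₀ 𝒱).Nonempty) : sInterPoint 𝒱 ∈ ⋂₀ 𝒱 :=
  Classical.epsilon_spec h

theorem sInterPoints_mono (h : 𝒰 ⊆ 𝒱) : sInterPoints κ 𝒰 ⊆ sInterPoints κ 𝒱 :=
  image_mono fun _ h𝒲 => ⟨h𝒲.1.trans h, h𝒲.2⟩

theorem mk_sInterPoints_le (hκ : ℵ₀ ≤ κ) (h𝒰 : #𝒰 ≤ 2 ^ κ) : #(sInterPoints κ 𝒰) ≤ 2 ^ κ :=
  calc #(sInterPoints κ 𝒰) ≤ #{𝒱 | 𝒱 ⊆ 𝒰 ∧ #𝒱 ≤ κ} := mk_image_le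
    _ ≤ max #𝒰 ℵ₀ ^ κ := mk_bounded_subset_le 𝒰 κ
    _ ≤ (2 ^ κ) ^ κ := power_le_power_right (max_le h𝒰 (hκ.trans (cantor κ).le))
    _ = 2 ^ κ := by rw [← power_mul, mul_eq_self hκ]

end SInterPoints

section ThetaAvoiding

variable {X : Type u} [TopologicalSpace X] [Nonempty X] {ι ι' : Type u} {κ : Cardinal.{u}}

/-- A sequence of sets is `κ`-θ-avoiding if the closure of each term misses the θ-closure of the
points chosen in the intersections of at most `κ` earlier terms. It is the property that turns
chosen points into θ-free sequences. -/
def IsThetaAvoiding [Preorder ι] (κ : Cardinal.{u}) (U : ι → Set X) : Prop :=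
  ∀ i, Disjoint (closure (U i)) (thetaClosure (sInterPoints κ (U '' Iio i)))

theorem exists_isThetaAvoiding [Preorder ι] [WellFoundedLT ι] (hκ : ℵ₀ ≤ κ)
    (hX : ∀ A : Set X, #A ≤ 2 ^ κ → thetaClosure A ≠ Set.univ) (hι : ∀ i : ι, #(Iio i) ≤ 2 ^ κ) :
    ∃ U : ι → Set X, (∀ i, IsOpen (U i) ∧ (U i).Nonempty) ∧ IsThetaAvoiding κ U := by
  have exists_next (𝒰 : Set (Set X)) (h𝒰 : #𝒰 ≤ 2 ^ κ) : ∃ U, (IsOpen U ∧ U.Nonempty) ∧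
      Disjoint (closure U) (thetaClosure (sInterPoints κ 𝒰)) := by
    obtain ⟨x, hx⟩ := (ne_univ_iff_exists_notMem _).1 (hX _ (mk_sInterPoints_le hκ h𝒰))
    obtain ⟨U, hU, hxU, hdisj⟩ :=
      (isThetaClosed_thetaClosure _).exists_isOpen_disjoint_closure hx
    exact ⟨U, ⟨hU, x, hxU⟩, hdisj⟩
  obtain ⟨U, hU⟩ := exists_forall_rel_image_Iio hι exists_next
  exact ⟨U, fun i => (hU i).1, fun i => (hU i).2⟩

theorem IsThetaAvoiding.comp_strictMono [Preorder ι] [Preorder ι'] {U : ι → Set X}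
    (hU : IsThetaAvoiding κ U) {e : ι' → ι} (he : StrictMono e) : IsThetaAvoiding κ (U ∘ e) := by
  intro i
  have himage : (U ∘ e) '' Iio i ⊆ U '' Iio (e i) := by
    rw [image_comp]
    exact image_mono he.mapsTo_Iio.image_subset
  exact (hU (e i)).mono_right (thetaClosure_mono (sInterPoints_mono himage))

theorem IsThetaAvoiding.isThetaFreeSeq [LinearOrder ι] {U : ι → Set X}
    (hU : IsThetaAvoiding κ U) (hκ : ∀ i : ι, #(Iic i) ≤ κ)
    (hne : ∀ i, (⋂₀ (U '' Iic i)).Nonempty) :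
    IsThetaFreeSeq fun i => sInterPoint (U '' Iic i) := by
  intro i
  have initial_subset : (fun j => sInterPoint (U '' Iic j)) '' {j | j < i} ⊆
      sInterPoints κ (U '' Iio i) := by
    rintro _ ⟨j, hj, rfl⟩
    exact mem_image_of_mem _ ⟨image_mono (Iic_subset_Iio.2 hj), mk_image_le.trans (hκ j)⟩
  have final_subset : (fun j => sInterPoint (U '' Iic j)) '' {j | i ≤ j} ⊆ U i := by
    rintro _ ⟨j, hij, rfl⟩
    exact sInterPoint_mem (hne j) _ (mem_image_of_mem U hij)
  exact ((hU i).symm.mono (thetaClosure_mono initial_subset) (closure_mono final_subset)).inter_eq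

end ThetaAvoiding

/-- if every θ-free sequence in `X` has length at most `κ` and some
cardinal `λ` with `κ < λ ≤ (2^κ)⁺` is a caliber of `X`, then `X` has a θ-dense
subset of size at most `2^κ`, i.e. `θd(X) ≤ 2^κ`. -/
theorem stmt14 {X : Type u} [TopologicalSpace X] (κ : Cardinal.{u}) (hκ : ℵ₀ ≤ κ)
    (hF : ∀ (ι : Type u) [LinearOrder ι] [WellFoundedLT ι] (f : ι → X),
      IsThetaFreeSeq f → #ι ≤ κ)
    (lam : Cardinal.{u}) (h1 : κ < lam) (h2 : lam ≤ Order.succ (2 ^ κ))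
    (hcal : IsCaliber X lam) :
    ∃ A : Set X, #A ≤ 2 ^ κ ∧ thetaClosure A = Set.univ := by
  by_contra! hdense
  obtain ⟨x, -⟩ := (ne_univ_iff_exists_notMem _).1 (hdense ∅ (by simp))
  have : Nonempty X := ⟨x⟩
  have hIio (i : lam.ord.ToType) : #(Iio i) ≤ 2 ^ κ :=
    Order.lt_succ_iff.1 (lt_of_lt_of_le (by simpa using mk_Iio_lt i) h2)
  obtain ⟨U, hopen, hU⟩ := exists_isThetaAvoiding hκ hdense hIio
  obtain ⟨S, hS, p, hp⟩ := hcal _ U (mk_ord_toType lam) hopen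
  obtain ⟨e⟩ : Nonempty ((Order.succ κ).ord.ToType ↪o S) :=
    nonempty_ord_toType_orderEmbedding (Order.succ_le_of_lt (h1.trans_eq hS.symm))
  have hV : IsThetaAvoiding κ (U ∘ Subtype.val ∘ e) :=
    hU.comp_strictMono ((Subtype.strictMono_coe _).comp e.strictMono)
  have hfree := hV.isThetaFreeSeq (mk_Iic_ord_toType_succ_le hκ) fun i =>
    ⟨p, forall_mem_image.2 fun j _ => mem_iInter₂.1 hp (e j) (e j).2⟩
  exact (Order.lt_succ κ).not_ge ((mk_ord_toType _).ge.trans (hF _ _ hfree))
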